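/- Let γ¹, ..., γⁿ be odd elements of the Clifford algebra Cl(p,q) of odd dimension n satisfying γᵃγᵇ + γᵇγᵃ = 2ηᵃᵇ. Then γ¹γ²⋯γⁿ = ± e¹e²⋯eⁿ. -/

import Mathlib

open CliffordAlgebra

/-- The quadratic form of signature (p,q) on ℝⁿ, n = p + q. -/
noncomputable def Qpq (p q : ℕ) : QuadraticForm ℝ (Fin (p + q) → ℝ) :=
  QuadraticMap.weightedSumSquares ℝ (fun i => if (i : ℕ) < p then (1 : ℝ) else -1)

/-- The generators e¹, ..., eⁿ of the Clifford algebra Cl(p,q). -/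
noncomputable def gen (p q : ℕ) (a : Fin (p + q)) : CliffordAlgebra (Qpq p q) :=
  ι (Qpq p q) (Pi.single a 1)

/-- The volume element e¹e²⋯eⁿ of Cl(p,q). -/
noncomputable def vol (p q : ℕ) : CliffordAlgebra (Qpq p q) :=
  ((List.finRange (p + q)).map (gen p q)).prod

/-- The diagonal matrix η = diag(1,...,1,−1,...,−1) with p pluses and q minuses. -/
def eta (p q : ℕ) (a b : Fin (p + q)) : ℝ :=
  if a = b then (if (a : ℕ) < p then 1 else -1) else 0

/-!
By the universal property there is an endomorphism `φ` of the Clifford algebra with `φ eᵃ = γᵃ`, and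
`φ` commutes with the grade involution because the `γᵃ` are odd. For an orthogonal basis of
anisotropic vectors the Clifford algebra is graded-simple (graded commutators with the `eᵃ` reduce
any nonzero element of a graded ideal to a nonzero scalar), so `φ` is injective, hence bijective by
finite dimension. Consequently `ω = e¹⋯eⁿ` and `φ ω = γ¹⋯γⁿ` have the same parity and the same
commutation sign with every odd element, whatever the parity of `n`. The products `φ ω * ω` and
`ω * ω` are then even and central, so they are scalars `c` and `s`, and
`c ^ 2 = φ (ω * ω) * (ω * ω) = s ^ 2` forces `c = ± s`.
-/

section VectorSubalgebra

variable {R M : Type*} [CommRing R] [AddCommGroup M] [Module R M]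

/-- The subalgebra of `CliffordAlgebra Q` generated by the vectors in `s`. Enlarging `s` by one
orthogonal vector at a time replaces a choice of basis of the Clifford algebra. -/
def vectorSubalgebra (Q : QuadraticForm R M) (s : Set M) : Subalgebra R (CliffordAlgebra Q) :=
  Algebra.adjoin R (ι Q '' s)

namespace vectorSubalgebra

variable {Q : QuadraticForm R M} {s : Set M} {v : M} {x y z : CliffordAlgebra Q}

lemma ι_mem (hv : v ∈ s) : ι Q v ∈ vectorSubalgebra Q s :=
  Algebra.subset_adjoin ⟨v, hv, rfl⟩

lemma eq_top_of_span_eq_top (hs : Submodule.span R s = ⊤) : vectorSubalgebra Q s = ⊤ := by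
  have hspan : Submodule.span R s ≤ (vectorSubalgebra Q s).toSubmodule.comap (ι Q) :=
    Submodule.span_le.2 fun _ hv ↦ ι_mem hv
  rw [eq_top_iff, ← adjoin_range_ι, Algebra.adjoin_le_iff]
  rintro _ ⟨m, rfl⟩
  exact hspan (hs ▸ Submodule.mem_top)

lemma involute_mem (hx : x ∈ vectorSubalgebra Q s) : involute x ∈ vectorSubalgebra Q s := by
  have hle : vectorSubalgebra Q s ≤ (vectorSubalgebra Q s).comap involute := by
    refine Algebra.adjoin_le ?_
    rintro _ ⟨v, hv, rfl⟩
    simpa only [SetLike.mem_coe, Subalgebra.mem_comap, involute_ι] using neg_mem (ι_mem hv)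
  exact hle hx

lemma mul_ι (hv : ∀ w ∈ s, Q.IsOrtho v w) (hx : x ∈ vectorSubalgebra Q s) :
    x * ι Q v = ι Q v * involute x := by
  induction hx using Algebra.adjoin_induction with
  | mem x hx =>
    obtain ⟨w, hw, rfl⟩ := hx
    rw [involute_ι, mul_neg, ι_mul_ι_comm_of_isOrtho (hv w hw).symm]
  | algebraMap r => rw [AlgHom.commutes, Algebra.commutes]
  | add x y _ _ hx hy => rw [map_add, add_mul, mul_add, hx, hy]
  | mul x y _ _ hx hy => rw [map_mul, mul_assoc, hy, ← mul_assoc, hx, mul_assoc]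

lemma ι_mul_mul_ι_mul (hv : ∀ w ∈ s, Q.IsOrtho v w) (hy : y ∈ vectorSubalgebra Q s) :
    ι Q v * y * (ι Q v * z) = Q v • (involute y * z) := by
  calc ι Q v * y * (ι Q v * z) = ι Q v * (y * ι Q v) * z := by simp only [mul_assoc]
    _ = ι Q v * ι Q v * (involute y * z) := by rw [mul_ι hv hy]; simp only [mul_assoc]
    _ = Q v • (involute y * z) := by rw [ι_sq_scalar, Algebra.smul_def]

lemma exists_eq_add_ι_mul (hv : ∀ w ∈ s, Q.IsOrtho v w)
    (hx : x ∈ vectorSubalgebra Q (insert v s)) :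
    ∃ y ∈ vectorSubalgebra Q s, ∃ z ∈ vectorSubalgebra Q s, x = y + ι Q v * z := by
  induction hx using Algebra.adjoin_induction with
  | mem x hx =>
    obtain ⟨w, rfl | hw, rfl⟩ := hx
    · exact ⟨0, zero_mem _, 1, one_mem _, by rw [zero_add, mul_one]⟩
    · exact ⟨ι Q w, ι_mem hw, 0, zero_mem _, by rw [mul_zero, add_zero]⟩
  | algebraMap r => exact ⟨_, algebraMap_mem _ r, 0, zero_mem _, by rw [mul_zero, add_zero]⟩
  | add x x' _ _ hx hx' =>
    obtain ⟨y, hy, z, hz, rfl⟩ := hx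
    obtain ⟨y', hy', z', hz', rfl⟩ := hx'
    exact ⟨_, add_mem hy hy', _, add_mem hz hz', by rw [mul_add]; abel⟩
  | mul x x' _ _ hx hx' =>
    obtain ⟨y, hy, z, hz, rfl⟩ := hx
    obtain ⟨y', hy', z', hz', rfl⟩ := hx'
    refine ⟨y * y' + Q v • (involute z * z'),
      add_mem (mul_mem hy hy') (Subalgebra.smul_mem _ (mul_mem (involute_mem hz) hz') _),
      involute y * z' + z * y', add_mem (mul_mem (involute_mem hy) hz') (mul_mem hz hy'), ?_⟩
    have hyz : y * (ι Q v * z') = ι Q v * (involute y * z') := by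
      rw [← mul_assoc, mul_ι hv hy, mul_assoc]
    rw [add_mul, mul_add, mul_add, ι_mul_mul_ι_mul hv hz, hyz, mul_add, mul_assoc (ι Q v)]
    abel

-- The graded commutator with `v` extracts the `v`-component, and nothing else.
lemma mul_ι_sub_ι_mul_involute (hv : ∀ w ∈ s, Q.IsOrtho v w) (hy : y ∈ vectorSubalgebra Q s)
    (hz : z ∈ vectorSubalgebra Q s) :
    (y + ι Q v * z) * ι Q v - ι Q v * involute (y + ι Q v * z) = (2 * Q v) • involute z := by
  have hright : ι Q v * z * ι Q v = Q v • involute z := by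
    simpa only [mul_one] using ι_mul_mul_ι_mul (z := 1) hv hz
  have hleft : ι Q v * (ι Q v * involute z) = Q v • involute z := by
    rw [← mul_assoc, ι_sq_scalar, Algebra.smul_def]
  rw [map_add, map_mul, involute_ι, add_mul, mul_add, mul_ι hv hy, hright, neg_mul, mul_neg, hleft,
    mul_smul, two_smul]
  abel

variable {l : List M}

lemma mem_bot_of_forall_mul_ι_eq (hl : l.Pairwise Q.IsOrtho)
    (hQ : ∀ v ∈ l, IsUnit (2 * Q v)) (hx : x ∈ vectorSubalgebra Q {v | v ∈ l})
    (hcomm : ∀ v ∈ l, x * ι Q v = ι Q v * involute x) :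
    x ∈ (⊥ : Subalgebra R (CliffordAlgebra Q)) := by
  induction l generalizing x with
  | nil => simpa [vectorSubalgebra] using hx
  | cons v l ih =>
    obtain ⟨hv, hl⟩ := List.pairwise_cons.1 hl
    rw [List.forall_mem_cons] at hQ hcomm
    rw [List.setOfPred_mem_cons] at hx
    obtain ⟨y, hy, z, hz, rfl⟩ := exists_eq_add_ι_mul hv hx
    have hz_zero : z = 0 := by
      have hsmul := mul_ι_sub_ι_mul_involute hv hy hz
      rw [sub_eq_zero.2 hcomm.1, eq_comm, hQ.1.smul_eq_zero] at hsmul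
      exact (map_eq_zero_iff _ involute_involutive.injective).1 hsmul
    rw [hz_zero, mul_zero, add_zero] at hcomm ⊢
    exact ih hl hQ.2 hy hcomm.2

lemma eq_zero_of_mem_ideal {I : Ideal (CliffordAlgebra Q)} [I.IsTwoSided]
    (hinv : ∀ x ∈ I, involute x ∈ I) (hscalar : ∀ r : R, algebraMap R _ r ∈ I → r = 0)
    (hl : l.Pairwise Q.IsOrtho) (hQ : ∀ v ∈ l, IsUnit (2 * Q v))
    (hx : x ∈ vectorSubalgebra Q {v | v ∈ l}) (hxI : x ∈ I) : x = 0 := by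
  induction l generalizing x with
  | nil =>
    obtain ⟨r, rfl⟩ : x ∈ (⊥ : Subalgebra R _) := by simpa [vectorSubalgebra] using hx
    exact (congrArg _ (hscalar r hxI)).trans (map_zero _)
  | cons v l ih =>
    obtain ⟨hv, hl⟩ := List.pairwise_cons.1 hl
    rw [List.forall_mem_cons] at hQ
    rw [List.setOfPred_mem_cons] at hx
    obtain ⟨y, hy, z, hz, rfl⟩ := exists_eq_add_ι_mul hv hx
    have hzI : z ∈ I := by
      have hsmul : (2 * Q v) • involute z ∈ I := by
        rw [← mul_ι_sub_ι_mul_involute hv hy hz]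
        exact sub_mem (I.mul_mem_right _ hxI) (I.mul_mem_left _ (hinv _ hxI))
      obtain ⟨u, hu⟩ := hQ.1
      have hmem := hinv _ (Submodule.smul_of_tower_mem I (↑u⁻¹ : R) hsmul)
      rwa [← hu, smul_smul, Units.inv_mul, one_smul, involute_involute] at hmem
    have hyI : y ∈ I := (I.add_mem_iff_left (I.mul_mem_left _ hzI)).1 hxI
    rw [ih hl hQ.2 hy hyI, ih hl hQ.2 hz hzI, mul_zero, add_zero]

end vectorSubalgebra

end VectorSubalgebra

section Pseudoscalar

variable {R M : Type*} [CommRing R] [AddCommGroup M] [Module R M] {Q : QuadraticForm R M}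

/-- `ω` behaves like a product of `n` orthogonal vectors spanning the space: it has the parity of
`n`, and it commutes with even elements and with odd ones up to the sign `(-1) ^ (n + 1)`.
The sign rule uses `n + 1` in place of `n - 1` to avoid truncated subtraction. -/
structure IsPseudoscalar (Q : QuadraticForm R M) (n : ℕ) (ω : CliffordAlgebra Q) : Prop where
  involute_eq : involute ω = (-1 : R) ^ n • ω
  mul_eq : ∀ x, x * ω = ω * involute^[n + 1] x

lemma iterate_involute_ι (n : ℕ) (v : M) :
    involute^[n] (ι Q v) = (-1 : R) ^ n • ι Q v := by
  induction n with
  | zero => simp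
  | succ n ih => rw [Function.iterate_succ_apply', ih, map_smul, involute_ι, pow_succ, mul_neg_one,
      neg_smul, smul_neg]

lemma ι_mul_prod_map_ι {l : List M} {v : M} (hv : ∀ w ∈ l, Q.IsOrtho v w) :
    ι Q v * (l.map (ι Q)).prod = (-1 : R) ^ l.length • ((l.map (ι Q)).prod * ι Q v) := by
  induction l with
  | nil => simp
  | cons w l ih =>
    obtain ⟨hvw, hvl⟩ := List.forall_mem_cons.1 hv
    rw [List.map_cons, List.prod_cons, ι_mul_ι_mul_of_isOrtho _ hvw, ih hvl, mul_smul_comm,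
      List.length_cons, pow_succ, mul_neg_one, neg_smul, mul_assoc]

lemma ι_mul_prod_map_ι_of_mem {l : List M} {v : M} (hl : l.Pairwise Q.IsOrtho) (hv : v ∈ l) :
    ι Q v * (l.map (ι Q)).prod = (-1 : R) ^ (l.length + 1) • ((l.map (ι Q)).prod * ι Q v) := by
  induction l with
  | nil => simp at hv
  | cons w l ih =>
    obtain ⟨hw, hl⟩ := List.pairwise_cons.1 hl
    rw [List.map_cons, List.prod_cons, List.length_cons]
    rcases List.mem_cons.1 hv with rfl | hvl
    · rw [mul_assoc, ← mul_smul_comm, pow_succ, pow_succ, mul_assoc, neg_one_mul, neg_neg, mul_one,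
        ι_mul_prod_map_ι hw]
    · rw [ι_mul_ι_mul_of_isOrtho _ (hw v hvl).symm, ih hl hvl, mul_smul_comm, pow_succ _ (_ + 1),
        mul_neg_one, neg_smul, mul_assoc]

lemma isPseudoscalar_prod_map_ι {l : List M} (hl : l.Pairwise Q.IsOrtho)
    (hspan : Submodule.span R {v | v ∈ l} = ⊤) :
    IsPseudoscalar Q l.length (l.map (ι Q)).prod where
  involute_eq := involute_prod_map_ι l
  mul_eq x := by
    have hx : x ∈ vectorSubalgebra Q {v | v ∈ l} :=
      vectorSubalgebra.eq_top_of_span_eq_top hspan ▸ Algebra.mem_top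
    induction hx using Algebra.adjoin_induction with
    | mem x hx =>
      obtain ⟨v, hv, rfl⟩ := hx
      rw [iterate_involute_ι, mul_smul_comm, ι_mul_prod_map_ι_of_mem hl hv]
    | algebraMap r => rw [Function.iterate_fixed (AlgHom.commutes _ r), Algebra.commutes]
    | add x y _ _ hx hy => rw [iterate_map_add, add_mul, mul_add, hx, hy]
    | mul x y _ _ hx hy => rw [iterate_map_mul, mul_assoc, hy, ← mul_assoc, hx, mul_assoc]

namespace IsPseudoscalar

variable {n : ℕ} {ω ω' : CliffordAlgebra Q}

lemma map {M' : Type*} [AddCommGroup M'] [Module R M'] {Q' : QuadraticForm R M'}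
    {φ : CliffordAlgebra Q →ₐ[R] CliffordAlgebra Q'} (hω : IsPseudoscalar Q n ω)
    (hφ : ∀ x, φ (involute x) = involute (φ x)) (hsurj : Function.Surjective φ) :
    IsPseudoscalar Q' n (φ ω) where
  involute_eq := by rw [← hφ, hω.involute_eq, map_smul]
  mul_eq := by
    intro x
    obtain ⟨y, rfl⟩ := hsurj x
    rw [← map_mul, hω.mul_eq, map_mul, (show Function.Semiconj φ _ _ from hφ).iterate_right]

lemma involute_mul (hω : IsPseudoscalar Q n ω) (hω' : IsPseudoscalar Q n ω') :
    involute (ω * ω') = ω * ω' := by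
  rw [map_mul, hω.involute_eq, hω'.involute_eq, smul_mul_smul_comm, ← mul_pow, neg_one_mul, neg_neg,
    one_pow, one_smul]

lemma commute_mul (hω : IsPseudoscalar Q n ω) (hω' : IsPseudoscalar Q n ω')
    (x : CliffordAlgebra Q) : Commute x (ω * ω') := by
  rw [commute_iff_eq, ← mul_assoc, hω.mul_eq, mul_assoc, hω'.mul_eq, ← Function.iterate_add_apply,
    involute_involutive.iterate_even ⟨_, rfl⟩, id, mul_assoc]

lemma mul_mem_bot (hω : IsPseudoscalar Q n ω) (hω' : IsPseudoscalar Q n ω') {l : List M}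
    (hl : l.Pairwise Q.IsOrtho) (hQ : ∀ v ∈ l, IsUnit (2 * Q v))
    (hspan : Submodule.span R {v | v ∈ l} = ⊤) :
    ω * ω' ∈ (⊥ : Subalgebra R (CliffordAlgebra Q)) :=
  vectorSubalgebra.mem_bot_of_forall_mul_ι_eq hl hQ
    (vectorSubalgebra.eq_top_of_span_eq_top hspan ▸ Algebra.mem_top) fun v _ ↦ by
      rw [hω.involute_mul hω', hω.commute_mul hω']

end IsPseudoscalar

end Pseudoscalar

section GradedHom

lemma map_eq_or_eq_neg_of_mul_mem_bot {R A : Type*} [CommRing R] [NoZeroDivisors R] [Ring A]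
    [Algebra R A] [FaithfulSMul R A] {φ : A →ₐ[R] A} {ω : A} (hω : IsUnit ω)
    (hsq : ω * ω ∈ (⊥ : Subalgebra R A)) (hmul : φ ω * ω ∈ (⊥ : Subalgebra R A)) :
    φ ω = ω ∨ φ ω = -ω := by
  obtain ⟨s, hs⟩ := Algebra.mem_bot.1 hsq
  obtain ⟨c, hc⟩ := Algebra.mem_bot.1 hmul
  have hcs : c * c = s * s := by
    apply FaithfulSMul.algebraMap_injective R A
    calc algebraMap R A (c * c) = φ ω * ω * algebraMap R A c := by rw [map_mul, hc]
      _ = φ ω * algebraMap R A c * ω := by rw [mul_assoc, ← Algebra.commutes, ← mul_assoc]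
      _ = φ (ω * ω) * (ω * ω) := by rw [hc, map_mul]; simp only [mul_assoc]
      _ = algebraMap R A (s * s) := by rw [← hs, AlgHom.commutes, map_mul]
  refine (mul_self_eq_mul_self_iff.1 hcs).imp (fun h ↦ ?_) (fun h ↦ ?_) <;>
    apply hω.mul_right_cancel
  · rw [← hc, h, hs]
  · rw [← hc, h, map_neg, hs, neg_mul]

section CommRing

variable {R M M' : Type*} [CommRing R] [AddCommGroup M] [Module R M] [AddCommGroup M'] [Module R M']
  {Q : QuadraticForm R M} {Q' : QuadraticForm R M'}

lemma involute_lift_apply {f : M →ₗ[R] CliffordAlgebra Q'}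
    (hf : ∀ m, f m * f m = algebraMap R _ (Q m)) (hodd : ∀ m, f m ∈ evenOdd Q' 1)
    (x : CliffordAlgebra Q) : lift Q ⟨f, hf⟩ (involute x) = involute (lift Q ⟨f, hf⟩ x) := by
  suffices (lift Q ⟨f, hf⟩).comp involute = involute.comp (lift Q ⟨f, hf⟩) from
    DFunLike.congr_fun this x
  ext m
  simp [involute_eq_of_mem_odd (hodd m)]

lemma injective_of_map_involute [FaithfulSMul R (CliffordAlgebra Q')]
    {φ : CliffordAlgebra Q →ₐ[R] CliffordAlgebra Q'} {l : List M} (hl : l.Pairwise Q.IsOrtho)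
    (hQ : ∀ v ∈ l, IsUnit (2 * Q v)) (hspan : Submodule.span R {v | v ∈ l} = ⊤)
    (hφ : ∀ x, φ (involute x) = involute (φ x)) : Function.Injective φ := by
  have hinv : ∀ x ∈ RingHom.ker φ, involute x ∈ RingHom.ker φ := fun x hx ↦ by
    rw [RingHom.mem_ker] at hx ⊢
    rw [hφ, hx, map_zero]
  have hscalar (r : R) (hr : algebraMap R _ r ∈ RingHom.ker φ) : r = 0 := by
    rwa [RingHom.mem_ker, AlgHom.commutes, FaithfulSMul.algebraMap_eq_zero_iff] at hr
  exact (injective_iff_map_eq_zero φ).2 fun x hx ↦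
    vectorSubalgebra.eq_zero_of_mem_ideal hinv hscalar hl hQ
      (vectorSubalgebra.eq_top_of_span_eq_top hspan ▸ Algebra.mem_top) hx

lemma finite_cliffordAlgebra_of_basis {κ : Type*} [LinearOrder κ] [Finite κ] [Invertible (2 : R)]
    (b : Module.Basis κ R M) (Q : QuadraticForm R M) : Module.Finite R (CliffordAlgebra Q) :=
  .of_basis (b.ExteriorAlgebra.map (equivExterior Q).symm)

lemma mul_self_eq_of_basis {κ A : Type*} [Ring A] [Algebra R A] (h2 : IsUnit (2 : A))
    (b : Module.Basis κ R M) (f : M →ₗ[R] A)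
    (hf : ∀ i j, f (b i) * f (b j) + f (b j) * f (b i) =
      algebraMap R A (QuadraticMap.polar Q (b i) (b j))) (v : M) :
    f v * f v = algebraMap R A (Q v) :=
  (forall_mul_self_eq_iff h2 f).2 (LinearMap.ext_basis b b hf) v

end CommRing

variable {K V : Type*} [Field K] [Invertible (2 : K)] [AddCommGroup V] [Module K V]
  {Q : QuadraticForm K V}

theorem map_prod_map_ι_eq_or_eq_neg {l : List V} {φ : CliffordAlgebra Q →ₐ[K] CliffordAlgebra Q}
    (hl : l.Pairwise Q.IsOrtho) (hQ : ∀ v ∈ l, Q v ≠ 0)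
    (hspan : Submodule.span K {v | v ∈ l} = ⊤) (hφ : ∀ x, φ (involute x) = involute (φ x)) :
    φ (l.map (ι Q)).prod = (l.map (ι Q)).prod ∨ φ (l.map (ι Q)).prod = -(l.map (ι Q)).prod := by
  have : Module.Finite K V := ⟨Submodule.fg_def.2 ⟨_, l.finite_toSet, hspan⟩⟩
  have := finite_cliffordAlgebra_of_basis (Module.finBasis K V) Q
  have hQ2 : ∀ v ∈ l, IsUnit (2 * Q v) :=
    fun v hv ↦ (isUnit_of_invertible 2).mul (hQ v hv).isUnit
  have hsurj : Function.Surjective φ :=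
    LinearMap.injective_iff_surjective (f := φ.toLinearMap).1
      (injective_of_map_involute hl hQ2 hspan hφ)
  have hunit : IsUnit (l.map (ι Q)).prod := List.prod_isUnit <|
    List.forall_mem_map.2 fun v hv ↦ isUnit_ι_of_isUnit Q (hQ v hv).isUnit
  have hω := isPseudoscalar_prod_map_ι hl hspan
  exact map_eq_or_eq_neg_of_mul_mem_bot hunit (hω.mul_mem_bot hω hl hQ2 hspan)
    ((hω.map hφ hsurj).mul_mem_bot hω hl hQ2 hspan)

theorem stmt_11_general {n : ℕ} (b : Module.Basis (Fin n) K V)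
    (hb : Pairwise fun i j ↦ Q.IsOrtho (b i) (b j)) (hQ : ∀ i, Q (b i) ≠ 0)
    (γ : Fin n → CliffordAlgebra Q) (hodd : ∀ i, γ i ∈ evenOdd Q 1)
    (hγ : ∀ i j, γ i * γ j + γ j * γ i = algebraMap K _ (QuadraticMap.polar Q (b i) (b j))) :
    ((List.finRange n).map γ).prod = ((List.finRange n).map fun i ↦ ι Q (b i)).prod ∨
      ((List.finRange n).map γ).prod = -((List.finRange n).map fun i ↦ ι Q (b i)).prod := by
  let f := b.constr K γ
  have hfb (i : Fin n) : f (b i) = γ i := b.constr_basis K γ i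
  have h2 : IsUnit (2 : CliffordAlgebra Q) := by
    simpa only [map_ofNat] using (isUnit_of_invertible (2 : K)).map (algebraMap K _)
  have hf : ∀ v, f v * f v = algebraMap K _ (Q v) :=
    mul_self_eq_of_basis h2 b f fun i j ↦ by rw [hfb, hfb, hγ]
  have hf_odd (v : V) : f v ∈ evenOdd Q 1 := by
    rw [show f v = _ from b.constr_apply_fintype K γ v]
    exact sum_mem fun i _ ↦ Submodule.smul_mem _ _ (hodd i)
  let l := (List.finRange n).map b
  have hl : l.Pairwise Q.IsOrtho :=
    List.pairwise_map.2 ((List.nodup_finRange n).imp fun hij ↦ hb hij)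
  have hl_span : Submodule.span K {v | v ∈ l} = ⊤ := by
    rw [← b.span_eq]
    congr 1
    ext v
    simp [l]
  have := map_prod_map_ι_eq_or_eq_neg hl (by simpa [l] using hQ) hl_span
    (involute_lift_apply hf hf_odd)
  simpa [l, map_list_prod, Function.comp_def, hfb] using this

end GradedHom

section Signature

lemma polar_weightedSumSquares {R κ : Type*} [CommRing R] [Fintype κ] (w x y : κ → R) :
    QuadraticMap.polar (QuadraticMap.weightedSumSquares R w) x y = 2 * ∑ i, w i * (x i * y i) := by
  simp only [QuadraticMap.polar, QuadraticMap.weightedSumSquares_apply, ← Finset.sum_sub_distrib,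
    Finset.mul_sum, Pi.add_apply, smul_eq_mul]
  exact Finset.sum_congr rfl fun i _ ↦ by ring

variable (p q : ℕ)

lemma ι_Qpq_basisFun (a : Fin (p + q)) : ι (Qpq p q) (Pi.basisFun ℝ _ a) = gen p q a := by
  rw [Pi.basisFun_apply, gen]

lemma polar_Qpq_basisFun (a b : Fin (p + q)) :
    QuadraticMap.polar (Qpq p q) (Pi.basisFun ℝ _ a) (Pi.basisFun ℝ _ b) = 2 * eta p q a b := by
  rw [Qpq, polar_weightedSumSquares, eta]
  by_cases hab : a = b
  · simp [Pi.single_apply, hab]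
  · simp [Pi.single_apply, hab, Ne.symm hab]

lemma isOrtho_Qpq_basisFun {a b : Fin (p + q)} (hab : a ≠ b) :
    (Qpq p q).IsOrtho (Pi.basisFun ℝ _ a) (Pi.basisFun ℝ _ b) := by
  rw [← QuadraticMap.isOrtho_polarBilin, QuadraticMap.polarBilin_apply_apply, polar_Qpq_basisFun,
    eta, if_neg hab, mul_zero]

lemma Qpq_basisFun_ne_zero (a : Fin (p + q)) : Qpq p q (Pi.basisFun ℝ _ a) ≠ 0 := by
  have hpolar := polar_Qpq_basisFun p q a a
  rw [QuadraticMap.polar_self, nsmul_eq_mul, Nat.cast_ofNat, mul_right_inj' two_ne_zero] at hpolar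
  rw [hpolar, eta, if_pos rfl]
  split_ifs <;> norm_num

end Signature

/-- Odd generators satisfying the Clifford relations in odd dimension have
ordered product equal to ± the volume element. -/
theorem stmt_11 (p q : ℕ) (hn : Odd (p + q))
    (γ : Fin (p + q) → CliffordAlgebra (Qpq p q))
    (hodd : ∀ a, γ a ∈ evenOdd (Qpq p q) 1)
    (hγ : ∀ a b, γ a * γ b + γ b * γ a =
      algebraMap ℝ (CliffordAlgebra (Qpq p q)) (2 * eta p q a b)) :
    ((List.finRange (p + q)).map γ).prod = vol p q ∨
      ((List.finRange (p + q)).map γ).prod = -vol p q := by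
  simpa only [vol, ι_Qpq_basisFun] using stmt_11_general (Pi.basisFun ℝ _)
    (fun _ _ ↦ isOrtho_Qpq_basisFun p q) (Qpq_basisFun_ne_zero p q) γ hodd
    fun a b ↦ by rw [hγ, polar_Qpq_basisFun]
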